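/- arXiv:2311.04136 — 4 statements merged into one kernel-verified Lean document; each statement's English description precedes it below -/
import Mathlib

section
/- Let S = K[x_1,…,x_n] be a polynomial ring over a field K of prime characteristic p and let q = p^e be a power of p. Then for any ideals I, J ⊆ S, (I ∩ J)^{[q]} = I^{[q]} ∩ J^{[q]}. -/
open MvPolynomial

attribute [local instance] MvPolynomial.gradedAlgebra

noncomputable section

variable {K : Type*} [Field K] {n : ℕ}

/-- The `q`-th Frobenius power `I^{[q]}` of an ideal. -/
def frobPow (I : Ideal (MvPolynomial (Fin n) K)) (q : ℕ) : Ideal (MvPolynomial (Fin n) K) :=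
  Ideal.span ((fun a => a ^ q) '' (I : Set (MvPolynomial (Fin n) K)))

/-- The associated primes of `S/I`. -/
def Ass (I : Ideal (MvPolynomial (Fin n) K)) : Set (Ideal (MvPolynomial (Fin n) K)) :=
  associatedPrimes (MvPolynomial (Fin n) K) (MvPolynomial (Fin n) K ⧸ I)

/-- The v-number of a graded ideal. -/
def vnum (I : Ideal (MvPolynomial (Fin n) K)) : ℕ :=
  sInf {d : ℕ | ∃ f : MvPolynomial (Fin n) K, f.IsHomogeneous d ∧
    ∃ 𝔭 ∈ Ass I, I.colon (Ideal.span {f}) = 𝔭}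

/-- The local v-number `v_𝔭(I)`. -/
def vnumLocal (I 𝔭 : Ideal (MvPolynomial (Fin n) K)) : ℕ :=
  sInf {d : ℕ | ∃ f : MvPolynomial (Fin n) K, f.IsHomogeneous d ∧
    I.colon (Ideal.span {f}) = 𝔭}

/-- The invariant `α_q(I)`. -/
def alphaq (I : Ideal (MvPolynomial (Fin n) K)) (q : ℕ) : ℕ :=
  sInf {d : ℕ | ∃ f : MvPolynomial (Fin n) K, f.IsHomogeneous d ∧
    f ∈ (frobPow I q).colon I ∧ f ∉ frobPow I q}

/-- The height of an ideal: the minimal height of an associated prime. -/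
def heightI (I : Ideal (MvPolynomial (Fin n) K)) : ℕ :=
  sInf {h : ℕ | ∃ 𝔭 ∈ Ass I, ∃ h𝔭 : 𝔭.IsPrime,
    Order.height (⟨𝔭, h𝔭⟩ : PrimeSpectrum (MvPolynomial (Fin n) K)) = (h : ℕ∞)}

/-- The big height of an ideal: the maximal height of an associated prime. -/
def bightI (I : Ideal (MvPolynomial (Fin n) K)) : ℕ :=
  sSup {h : ℕ | ∃ 𝔭 ∈ Ass I, ∃ h𝔭 : 𝔭.IsPrime,
    Order.height (⟨𝔭, h𝔭⟩ : PrimeSpectrum (MvPolynomial (Fin n) K)) = (h : ℕ∞)}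

/-- A graded (homogeneous) ideal with respect to the standard grading. -/
def IsGraded (I : Ideal (MvPolynomial (Fin n) K)) : Prop :=
  Ideal.IsHomogeneous (homogeneousSubmodule (Fin n) K) I

/-- A monomial ideal. -/
def IsMonomialIdeal (I : Ideal (MvPolynomial (Fin n) K)) : Prop :=
  ∃ s : Set (Fin n →₀ ℕ), I = Ideal.span ((fun a => monomial a (1 : K)) '' s)

/-!
Raising to the `q`-th power is a ring endomorphism of `S`, and `I^{[q]}` is the extension of `I`
along it. Extension along a flat homomorphism commutes with intersections, so it suffices that the
Frobenius of `R[x_σ]` is flat as soon as the one of `R` is. It factors as `x_i ↦ x_i ^ p` followed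
by the Frobenius of `R` on coefficients: the latter is a base change of the Frobenius of `R`, and
the former makes `R[x_σ]` free over itself, on the monomials with all exponents less than `p`.
-/

theorem exists_finset_sum_smul_eq_of_mem_smul_top {R M : Type*} [CommSemiring R] [AddCommMonoid M]
    [Module R M] {I J : Ideal R} {x : M} (hxI : x ∈ I • (⊤ : Submodule R M))
    (hxJ : x ∈ J • (⊤ : Submodule R M)) :
    ∃ (s : Finset M) (a b : s → R), (∀ i, a i ∈ I) ∧ (∀ i, b i ∈ J) ∧
      ∑ i, a i • (i : M) = x ∧ ∑ i, b i • (i : M) = x := by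
  classical
  rw [← Submodule.span_univ, ← Set.range_id, Submodule.mem_ideal_smul_span_iff_exists_sum]
    at hxI hxJ
  obtain ⟨a, ha, hax⟩ := hxI
  obtain ⟨b, hb, hbx⟩ := hxJ
  have sum_coe_eq {s : Finset M} (c : M →₀ R) (hs : c.support ⊆ s) :
      ∑ i : s, c i • (i : M) = c.sum fun m r => r • m := by
    rw [Finset.sum_coe_sort s fun m => c m • m]
    exact (c.sum_of_support_subset hs (fun m r => r • m) fun m _ => zero_smul R m).symm
  exact ⟨a.support ∪ b.support, fun i => a i, fun i => b i, fun i => ha i, fun i => hb i,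
    (sum_coe_eq a Finset.subset_union_left).trans hax,
    (sum_coe_eq b Finset.subset_union_right).trans hbx⟩

theorem inf_smul_top_of_flat {R M : Type*} [CommRing R] [AddCommGroup M] [Module R M]
    [Module.Flat R M] (I J : Ideal R) :
    (I ⊓ J) • (⊤ : Submodule R M) = I • ⊤ ⊓ J • ⊤ := by
  refine le_antisymm
    (le_inf (Submodule.smul_mono_left inf_le_left) (Submodule.smul_mono_left inf_le_right)) ?_
  rintro x ⟨hxI, hxJ⟩
  obtain ⟨s, a, b, ha, hb, hax, hbx⟩ := exists_finset_sum_smul_eq_of_mem_smul_top hxI hxJ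
  have relation : ∑ i, (a i - b i) • (i : M) = 0 := by
    simp only [sub_smul, Finset.sum_sub_distrib, hax, hbx, sub_self]
  obtain ⟨k, A, y, hy, hA⟩ := Module.Flat.isTrivialRelation_of_sum_smul_eq_zero relation
  have coeff_eq (j : Fin k) : ∑ i, a i * A i j = ∑ i, b i * A i j := by
    simpa only [sub_mul, Finset.sum_sub_distrib, sub_eq_zero] using hA j
  have coeff_mem (j : Fin k) : ∑ i, a i * A i j ∈ I ⊓ J :=
    ⟨I.sum_mem fun i _ => I.mul_mem_right _ (ha i),
      coeff_eq j ▸ J.sum_mem fun i _ => J.mul_mem_right _ (hb i)⟩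
  have x_eq : x = ∑ j, (∑ i, a i * A i j) • y j :=
    calc x = ∑ i, a i • ∑ j, A i j • y j := by simp only [← hax, ← hy]
      _ = ∑ j, (∑ i, a i * A i j) • y j := by
        simp only [Finset.smul_sum, Finset.sum_smul, mul_smul]
        exact Finset.sum_comm
  rw [x_eq]
  exact Submodule.sum_mem _ fun j _ => Submodule.smul_mem_smul (coeff_mem j) trivial

theorem map_inf_of_flat {R S : Type*} [CommRing R] [CommRing S] {f : R →+* S} (hf : f.Flat)
    (I J : Ideal R) : (I ⊓ J).map f = I.map f ⊓ J.map f := by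
  algebraize [f]
  rw [← f.algebraMap_toAlgebra]
  apply Submodule.restrictScalars_injective R
  simpa only [Ideal.smul_top_eq_map, Submodule.restrictScalars_inf]
    using inf_smul_top_of_flat (M := S) I J

attribute [local instance] MvPolynomial.algebraMvPolynomial in
theorem flat_mvPolynomial_map {R S : Type*} (σ : Type*) [CommRing R] [CommRing S] {f : R →+* S}
    (hf : f.Flat) : (MvPolynomial.map f : MvPolynomial σ R →+* MvPolynomial σ S).Flat := by
  algebraize [f]
  have pushout : Algebra.IsPushout R (MvPolynomial σ R) S (MvPolynomial σ S) := inferInstance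
  exact RingHom.flat_algebraMap_iff.mpr (Module.Flat.isBaseChange R _ S _ pushout.out)

-- `R[M]` is free over `R[N]` on the basis `g t`: in terms of the bases over `R`, the isomorphism
-- `⨁_T R[N] ≃ R[M]` is the bijection `T × N ≃ M`.
theorem flat_mapDomainRingHom (R : Type*) {M N T : Type*} [CommRing R] [AddCommMonoid M]
    [AddCommMonoid N] {f : N →+ M} {g : T → M}
    (hfg : Function.Bijective fun x : T × N => f x.2 + g x.1) :
    (AddMonoidAlgebra.mapDomainRingHom R f).Flat := by
  algebraize [AddMonoidAlgebra.mapDomainRingHom R f]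
  let L : (T →₀ AddMonoidAlgebra R N) →ₗ[AddMonoidAlgebra R N] AddMonoidAlgebra R M :=
    Finsupp.linearCombination _ fun t => AddMonoidAlgebra.single (g t) 1
  let e : (T →₀ AddMonoidAlgebra R N) ≃ₗ[R] AddMonoidAlgebra R M :=
    Finsupp.mapRange.linearEquiv (AddMonoidAlgebra.coeffLinearEquiv R) ≪≫ₗ
      (Finsupp.curryLinearEquiv R).symm ≪≫ₗ Finsupp.domLCongr (Equiv.ofBijective _ hfg) ≪≫ₗ
      (AddMonoidAlgebra.coeffLinearEquiv R).symm
  have L_eq_e : L.toAddMonoidHom = e.toLinearMap.toAddMonoidHom := by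
    ext t n r : 3
    simp [L, e, Algebra.smul_def, RingHom.algebraMap_toAlgebra]
  have L_bijective : Function.Bijective L := by
    have coe_eq : ⇑L = e := funext (DFunLike.congr_fun L_eq_e)
    exact coe_eq ▸ e.bijective
  exact Module.Flat.of_linearEquiv (LinearEquiv.ofBijective L L_bijective).symm

theorem bijective_nsmul_add_of_forall_lt (σ : Type*) {q : ℕ} (hq : 0 < q) :
    Function.Bijective fun x : {r : σ →₀ ℕ // ∀ i, r i < q} × (σ →₀ ℕ) => q • x.2 + x.1 := by
  refine Function.bijective_iff_has_inverse.mpr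
    ⟨fun d => (⟨d.mapRange (· % q) (Nat.zero_mod q), fun i => Nat.mod_lt _ hq⟩,
      d.mapRange (· / q) (Nat.zero_div q)), ?_, fun d => ?_⟩
  · rintro ⟨⟨r, hr⟩, d⟩
    ext i
    · simp [Nat.mod_eq_of_lt (hr i)]
    · simp [Nat.mul_add_div hq, Nat.div_eq_of_lt (hr i)]
  · ext i
    simp [Nat.div_add_mod]

theorem expand_eq_mapDomainRingHom (σ R : Type*) [CommSemiring R] (q : ℕ) :
    (expand q : MvPolynomial σ R →ₐ[R] MvPolynomial σ R).toRingHom =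
      AddMonoidAlgebra.mapDomainRingHom R (nsmulAddMonoidHom q) := by
  refine RingHom.ext fun φ => ?_
  induction φ using MvPolynomial.induction_on' with
  | monomial d r => exact (expand_monomial q d r).trans AddMonoidAlgebra.mapDomain_single.symm
  | add φ ψ hφ hψ => rw [map_add, map_add, hφ, hψ]

theorem flat_expand (σ R : Type*) [CommRing R] {q : ℕ} (hq : 0 < q) :
    (expand q : MvPolynomial σ R →ₐ[R] MvPolynomial σ R).toRingHom.Flat := by
  rw [expand_eq_mapDomainRingHom]
  exact flat_mapDomainRingHom R (bijective_nsmul_add_of_forall_lt σ hq)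

section Frobenius

variable {R : Type*} [CommRing R] {p : ℕ} [ExpChar R p]

theorem flat_iterateFrobenius (h : (frobenius R p).Flat) (e : ℕ) :
    (iterateFrobenius R p e).Flat := by
  induction e with
  | zero => simpa only [iterateFrobenius_zero] using RingHom.Flat.id R
  | succ e ih =>
    have succ_eq_comp :
        iterateFrobenius R p (e + 1) = (iterateFrobenius R p e).comp (frobenius R p) := by
      ext x
      rw [iterateFrobenius_add_apply, iterateFrobenius_one, RingHom.comp_apply]
    exact succ_eq_comp ▸ h.comp ih

theorem flat_frobenius_mvPolynomial (σ : Type*) (h : (frobenius R p).Flat) :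
    (frobenius (MvPolynomial σ R) p).Flat := by
  have frobenius_eq_comp : frobenius (MvPolynomial σ R) p =
      (MvPolynomial.map (frobenius R p)).comp (expand p).toRingHom :=
    RingHom.ext fun _ => (map_frobenius_expand p).symm
  rw [frobenius_eq_comp]
  exact (flat_expand σ R (expChar_pos R p)).comp (flat_mvPolynomial_map σ h)

theorem stmt2_general {σ : Type*} (h : (frobenius R p).Flat) (e : ℕ)
    (I J : Ideal (MvPolynomial σ R)) :
    (I ⊓ J).map (iterateFrobenius (MvPolynomial σ R) p e) =
      I.map (iterateFrobenius (MvPolynomial σ R) p e) ⊓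
        J.map (iterateFrobenius (MvPolynomial σ R) p e) :=
  map_inf_of_flat (flat_iterateFrobenius (flat_frobenius_mvPolynomial σ h) e) I J

end Frobenius

theorem frobPow_pow_eq_map_iterateFrobenius (p e : ℕ) [ExpChar K p]
    (I : Ideal (MvPolynomial (Fin n) K)) :
    frobPow I (p ^ e) = I.map (iterateFrobenius (MvPolynomial (Fin n) K) p e) :=
  rfl

theorem stmt2 {K : Type*} [Field K] {n : ℕ} (p : ℕ) (hp : p.Prime) [CharP K p]
    (q : ℕ) (hq : ∃ e : ℕ, q = p ^ e) (I J : Ideal (MvPolynomial (Fin n) K)) :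
    frobPow (I ⊓ J) q = frobPow I q ⊓ frobPow J q := by
  obtain ⟨e, rfl⟩ := hq
  have : ExpChar K p := .prime hp
  simpa only [frobPow_pow_eq_map_iterateFrobenius p e] using
    stmt2_general (.of_isField (Field.toIsField K) (frobenius K p)) e I J

end
end

section
/- Let S = K[x_1,…,x_n] be a standard graded polynomial ring over a field K of prime characteristic p, and let I ⊆ S be an ideal generated by K-linearly independent linear forms l_1,…,l_m. Then for all q = p^e > 1, v(I^{[q]}) = α_q(I) = (q−1)·m = (q−1)·height(I). -/
open MvPolynomial

attribute [local instance] MvPolynomial.gradedAlgebra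

noncomputable section

variable {K : Type*} [Field K] {n : ℕ}

/-!
Extend `l` to a basis of the space of linear forms. The resulting linear change of coordinates
preserves degrees and turns `I` into `(x_1, …, x_m)` and `I^{[q]}` into the monomial ideal
`(x_1^q, …, x_m^q)`. There the colon of `I^{[q]}` by `∏ x_i^(q-1)` is the prime `I`, while every `f`
in `I^{[q]} : I` but not in `I^{[q]}` has a monomial divisible by `∏ x_i^(q-1)`; this computes
`α_q(I)`. Finally `v(I^{[q]}) ≥ α_q(I)`, because a prime of the form `I^{[q]} : f` contains `a^q`
for every `a ∈ I`, hence contains `I`; equality holds since `∏ l_i^(q-1)` attains both minima.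
-/

section Variables

variable {σ R : Type*}

theorem mem_span_X_pow_image [CommSemiring R] {s : Set σ} {q : ℕ} {f : MvPolynomial σ R} :
    f ∈ Ideal.span ((fun i => X i ^ q) '' s) ↔ ∀ a ∈ f.support, ∃ i ∈ s, q ≤ a i := by
  have image_eq : (fun i => (X i : MvPolynomial σ R) ^ q) '' s =
      (fun a => monomial a 1) '' ((fun i => Finsupp.single i q) '' s) := by
    simp only [Set.image_image, X_pow_eq_monomial]
  rw [image_eq, mem_ideal_span_monomial_image]
  simp

theorem X_mem_span_X_image [CommSemiring R] [Nontrivial R] {s : Set σ} {i : σ} :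
    (X i : MvPolynomial σ R) ∈ Ideal.span (X '' s) ↔ i ∈ s := by
  simp [mem_ideal_span_X_image, support_X, Finsupp.single_apply_eq_zero]

theorem span_X_image_eq_ker [CommRing R] (s : Set σ) :
    Ideal.span (X '' s) =
      RingHom.ker (aeval (sᶜ.indicator X) : MvPolynomial σ R →ₐ[R] MvPolynomial σ R) := by
  classical
  set P : Ideal (MvPolynomial σ R) := Ideal.span (X '' s)
  apply le_antisymm
  · rw [Ideal.span_le]
    rintro _ ⟨i, hi, rfl⟩
    simp [hi]
  · intro f hf
    have mk_comp : (Ideal.Quotient.mkₐ R P).comp (aeval (sᶜ.indicator X)) =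
        Ideal.Quotient.mkₐ R P := by
      ext i
      by_cases hi : i ∈ s
      · have : (X i : MvPolynomial σ R) ∈ P := Ideal.subset_span ⟨i, hi, rfl⟩
        simp [hi, Ideal.Quotient.eq_zero_iff_mem.mpr this]
      · simp [hi]
    rw [← Ideal.Quotient.eq_zero_iff_mem, ← Ideal.Quotient.mkₐ_eq_mk R, ← mk_comp,
      AlgHom.comp_apply, RingHom.mem_ker.mp hf, map_zero]

theorem isPrime_span_X_image [CommRing R] [IsDomain R] (s : Set σ) :
    (Ideal.span (X '' s : Set (MvPolynomial σ R))).IsPrime := by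
  rw [span_X_image_eq_ker]
  exact RingHom.ker_isPrime _

theorem card_le_height_span_X_image [CommRing R] [IsDomain R] (s : Finset σ) :
    (s.card : ℕ∞) ≤ (Ideal.span (X '' (s : Set σ) : Set (MvPolynomial σ R))).height := by
  classical
  induction s using Finset.induction_on with
  | empty => simp
  | insert i s hi ih =>
    have := isPrime_span_X_image (R := R) (s : Set σ)
    have := isPrime_span_X_image (R := R) ((insert i s : Finset σ) : Set σ)
    have span_lt : Ideal.span (X '' (s : Set σ) : Set (MvPolynomial σ R)) <
        Ideal.span (X '' ((insert i s : Finset σ) : Set σ)) := by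
      refine SetLike.lt_iff_le_and_exists.mpr
        ⟨Ideal.span_mono (Set.image_mono (by simp)), X i, ?_, ?_⟩ <;>
      simp [X_mem_span_X_image, hi, -Finset.coe_insert]
    calc ((insert i s).card : ℕ∞) = s.card + 1 := by simp [hi]
      _ ≤ (Ideal.span (X '' (s : Set σ) : Set (MvPolynomial σ R))).height + 1 := by gcongr
      _ ≤ _ := Ideal.height_add_one_le_of_lt_of_isPrime span_lt

theorem colon_prod_X_pow [CommSemiring R] (s : Finset σ) {q : ℕ} (hq : 0 < q) :
    (Ideal.span ((fun i => (X i : MvPolynomial σ R) ^ q) '' (s : Set σ))).colon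
      {∏ i ∈ s, X i ^ (q - 1)} = Ideal.span (X '' (s : Set σ)) := by
  ext g
  rw [Submodule.mem_colon_singleton, smul_eq_mul, prod_X_pow, mem_span_X_pow_image,
    mem_ideal_span_X_image]
  set b : σ →₀ ℕ := Finsupp.indicator s fun _ _ => q - 1
  have b_apply {i : σ} (hi : i ∈ s) : b i = q - 1 := Finsupp.indicator_of_mem hi _
  constructor
  · intro h a ha
    obtain ⟨i, hi, hle⟩ := h (a + b) (by simpa using ha)
    rw [Finsupp.add_apply, b_apply hi] at hle
    exact ⟨i, hi, by omega⟩
  · intro h c hc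
    rw [mem_support_iff, coeff_mul_monomial', mul_one, ite_ne_right_iff] at hc
    replace hc := hc.2
    obtain ⟨i, hi, hne⟩ := h (c - b) (mem_support_iff.mpr hc)
    rw [Finsupp.tsub_apply, b_apply hi] at hne
    exact ⟨i, hi, by omega⟩

theorem mul_card_le_of_mem_colon_X [CommSemiring R] {s : Finset σ} {q d : ℕ}
    {f : MvPolynomial σ R} (hf : f.IsHomogeneous d)
    (hmem : f ∈ (Ideal.span ((fun i => X i ^ q) '' (s : Set σ))).colon (X '' (s : Set σ)))
    (hnotMem : f ∉ Ideal.span ((fun i => X i ^ q) '' (s : Set σ))) :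
    (q - 1) * s.card ≤ d := by
  rw [mem_span_X_pow_image] at hnotMem
  push Not at hnotMem
  obtain ⟨a, ha, lt_q⟩ := hnotMem
  -- The monomial `a` lies outside the ideal but `a + single i 1` lies inside, so the exponent of
  -- `X i` is the one that crosses the threshold `q`.
  have exponent_ge : ∀ i ∈ s, q - 1 ≤ a i := by
    intro i hi
    have mul_mem := Submodule.mem_colon.mp hmem (X i) ⟨i, hi, rfl⟩
    obtain ⟨j, hj, hle⟩ := mem_span_X_pow_image.mp mul_mem (a + Finsupp.single i 1)
      (by simpa [coeff_mul_X] using ha)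
    have := lt_q j hj
    obtain rfl | hij := eq_or_ne i j
    · simpa using hle
    · rw [Finsupp.add_apply, Finsupp.single_eq_of_ne hij.symm, add_zero] at hle
      omega
  calc (q - 1) * s.card = ∑ _i ∈ s, (q - 1) := by simp [mul_comm]
    _ ≤ ∑ i ∈ s, a i := Finset.sum_le_sum exponent_ge
    _ ≤ ∑ i ∈ a.support, a i := Finset.sum_le_sum_of_ne_zero (by simp)
    _ = d := (hf.degree_eq_sum_deg_support ha).symm

end Variables

section Coordinates

variable {ι σ R : Type*} [CommRing R]

/-- The variables, as a basis of the module of linear forms. -/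
def linearFormBasis (σ R : Type*) [CommRing R] :
    Module.Basis σ R (homogeneousSubmodule σ R 1) :=
  (Module.Basis.span (linearIndependent_X σ R)).map
    (LinearEquiv.ofEq _ _ homogeneousSubmodule_one_eq_span_X.symm)

theorem coe_linearFormBasis (i : σ) : (linearFormBasis σ R i : MvPolynomial σ R) = X i := by
  simp [linearFormBasis, Module.Basis.span_apply]

/-- The linear change of coordinates sending the variables to a given basis of the linear forms.
Both polynomial rings are the symmetric algebra of the module of linear forms, which yields the
inverse without matrices. -/
def linearChange (b : Module.Basis ι R (homogeneousSubmodule σ R 1)) :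
    MvPolynomial ι R ≃ₐ[R] MvPolynomial σ R :=
  (SymmetricAlgebra.equivMvPolynomial b).symm.trans
    (SymmetricAlgebra.equivMvPolynomial (linearFormBasis σ R))

theorem equivMvPolynomial_ι {M : Type*} [AddCommGroup M] [Module R M] (b : Module.Basis ι R M)
    (v : M) : SymmetricAlgebra.equivMvPolynomial b (SymmetricAlgebra.ι R M v) =
      Finsupp.linearCombination R X (b.repr v) := by
  have : (SymmetricAlgebra.equivMvPolynomial b).toLinearMap ∘ₗ SymmetricAlgebra.ι R M =
      Finsupp.linearCombination R X ∘ₗ b.repr.toLinearMap := b.ext (by simp)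
  exact DFunLike.congr_fun this v

theorem isHomogeneous_equivMvPolynomial_ι {M : Type*} [AddCommGroup M] [Module R M]
    (b : Module.Basis ι R M) (v : M) :
    (SymmetricAlgebra.equivMvPolynomial b (SymmetricAlgebra.ι R M v)).IsHomogeneous 1 := by
  rw [equivMvPolynomial_ι, ← mem_homogeneousSubmodule, homogeneousSubmodule_one_eq_span_X,
    ← Finsupp.range_linearCombination]
  exact LinearMap.mem_range_self _ _

theorem linearChange_X (b : Module.Basis ι R (homogeneousSubmodule σ R 1)) (i : ι) :
    linearChange b (X i) = b i := by
  have : Finsupp.linearCombination R X ∘ₗ (linearFormBasis σ R).repr.toLinearMap =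
      (homogeneousSubmodule σ R 1).subtype :=
    (linearFormBasis σ R).ext (by simp [coe_linearFormBasis])
  simpa [linearChange, equivMvPolynomial_ι] using DFunLike.congr_fun this (b i)

theorem isHomogeneous_of_forall_isHomogeneous_X (φ : MvPolynomial ι R →ₐ[R] MvPolynomial σ R)
    (hφ : ∀ i, (φ (X i)).IsHomogeneous 1) {f : MvPolynomial ι R} {d : ℕ}
    (hf : f.IsHomogeneous d) : (φ f).IsHomogeneous d := by
  rw [aeval_unique φ, ← one_mul d]
  exact hf.aeval _ hφ

theorem isHomogeneous_linearChange_iff (b : Module.Basis ι R (homogeneousSubmodule σ R 1))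
    {f : MvPolynomial ι R} {d : ℕ} : (linearChange b f).IsHomogeneous d ↔ f.IsHomogeneous d := by
  constructor
  · intro hf
    rw [← (linearChange b).symm_apply_apply f]
    refine isHomogeneous_of_forall_isHomogeneous_X (linearChange b).symm.toAlgHom (fun i => ?_) hf
    simpa [linearChange] using! isHomogeneous_equivMvPolynomial_ι b (linearFormBasis σ R i)
  · refine isHomogeneous_of_forall_isHomogeneous_X (linearChange b).toAlgHom fun i => ?_
    exact (linearChange_X b i).symm ▸ (b i).2

end Coordinates

section LinearForms

variable {σ τ : Type*} {l : τ → MvPolynomial σ K}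

theorem exists_algEquiv_X_inl_eq (hl : ∀ i, (l i).IsHomogeneous 1) (hli : LinearIndependent K l) :
    ∃ (ι : Set (homogeneousSubmodule σ K 1))
      (φ : MvPolynomial (τ ⊕ ι) K ≃ₐ[K] MvPolynomial σ K),
      (∀ i, φ (X (.inl i)) = l i) ∧ ∀ f d, (φ f).IsHomogeneous d ↔ f.IsHomogeneous d := by
  let l' : τ → homogeneousSubmodule σ K 1 := fun i => ⟨l i, hl i⟩
  have hl' : LinearIndependent K l' := .of_comp (homogeneousSubmodule σ K 1).subtype hli
  have sumExtend_inl (i : τ) : Module.Basis.sumExtend hl' (.inl i) = l' i := by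
    rw [Module.Basis.sumExtend, Module.Basis.reindex_apply, Module.Basis.extend_apply_self]
    rfl
  refine ⟨_, linearChange (Module.Basis.sumExtend hl'), fun i => ?_,
    fun f d => isHomogeneous_linearChange_iff _⟩
  rw [linearChange_X, sumExtend_inl]

section Transfer

variable {ι : Type*} {φ : MvPolynomial (τ ⊕ ι) K ≃ₐ[K] MvPolynomial σ K}

theorem span_range_pow_eq_map (hφ : ∀ i, φ (X (.inl i)) = l i) (q : ℕ) :
    Ideal.span (Set.range fun i => l i ^ q) =
      (Ideal.span ((fun j => X j ^ q) '' Set.range Sum.inl)).map φ.toRingEquiv := by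
  rw [Ideal.map_span]
  congr 1
  ext f
  simp [hφ]

theorem span_range_eq_map (hφ : ∀ i, φ (X (.inl i)) = l i) :
    Ideal.span (Set.range l) =
      (Ideal.span (X '' Set.range Sum.inl)).map φ.toRingEquiv := by
  simpa only [pow_one] using span_range_pow_eq_map hφ 1

end Transfer

variable (hl : ∀ i, (l i).IsHomogeneous 1) (hli : LinearIndependent K l)
include hl hli

theorem isPrime_span_linearForms : (Ideal.span (Set.range l)).IsPrime := by
  obtain ⟨ι, φ, hφ, -⟩ := exists_algEquiv_X_inl_eq hl hli
  rw [span_range_eq_map hφ]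
  have := isPrime_span_X_image (R := K) (Set.range (Sum.inl : τ → τ ⊕ ι))
  exact Ideal.map_isPrime_of_equiv φ.toRingEquiv

variable [Fintype τ]

theorem height_span_linearForms [Finite σ] :
    (Ideal.span (Set.range l)).height = Fintype.card τ := by
  classical
  apply le_antisymm
  · have := isPrime_span_linearForms hl hli
    have height_le := Ideal.height_le_card_of_mem_minimalPrimes_span_finset
      (p := Ideal.span (Set.range l)) (s := Finset.univ.image l)
      (by simp [Ideal.minimalPrimes_eq_subsingleton_self])
    exact height_le.trans (mod_cast Finset.card_image_le)
  · obtain ⟨ι, φ, hφ, -⟩ := exists_algEquiv_X_inl_eq hl hli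
    rw [span_range_eq_map hφ, RingEquiv.height_map]
    simpa using card_le_height_span_X_image (R := K) (Finset.univ.map (.inl : τ ↪ τ ⊕ ι))

theorem colon_prod_linearForms_pow {q : ℕ} (hq : 0 < q) :
    (Ideal.span (Set.range fun i => l i ^ q)).colon {∏ i, l i ^ (q - 1)} =
      Ideal.span (Set.range l) := by
  obtain ⟨ι, φ, hφ, -⟩ := exists_algEquiv_X_inl_eq hl hli
  ext g
  obtain ⟨g, rfl⟩ := φ.toRingEquiv.surjective g
  have prod_eq : ∏ i, l i ^ (q - 1) =
      φ.toRingEquiv (∏ j ∈ Finset.univ.map (.inl : τ ↪ τ ⊕ ι), X j ^ (q - 1)) := by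
    simp [map_prod, hφ]
  have coe_eq : ((Finset.univ.map .inl : Finset (τ ⊕ ι)) : Set (τ ⊕ ι)) = Set.range Sum.inl := by
    simp
  rw [span_range_eq_map hφ, span_range_pow_eq_map hφ, Submodule.mem_colon_singleton, prod_eq,
    smul_eq_mul, ← map_mul, Ideal.apply_mem_of_equiv_iff, Ideal.apply_mem_of_equiv_iff, ← coe_eq,
    ← colon_prod_X_pow _ hq, Submodule.mem_colon_singleton, smul_eq_mul]

theorem mul_card_le_of_mem_colon_linearForms {q d : ℕ} {f : MvPolynomial σ K}
    (hf : f.IsHomogeneous d)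
    (hmem : f ∈ (Ideal.span (Set.range fun i => l i ^ q)).colon (Set.range l))
    (hnotMem : f ∉ Ideal.span (Set.range fun i => l i ^ q)) :
    (q - 1) * Fintype.card τ ≤ d := by
  obtain ⟨ι, φ, hφ, isHomogeneous_φ⟩ := exists_algEquiv_X_inl_eq hl hli
  obtain ⟨f, rfl⟩ := φ.toRingEquiv.surjective f
  rw [span_range_pow_eq_map hφ, Ideal.apply_mem_of_equiv_iff] at hnotMem
  have hmem' : f ∈ (Ideal.span ((fun j => X j ^ q) '' Set.range Sum.inl)).colon
      (X '' Set.range Sum.inl) := by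
    rw [Submodule.mem_colon] at hmem ⊢
    rintro _ ⟨_, ⟨i, rfl⟩, rfl⟩
    rw [← Ideal.apply_mem_of_equiv_iff (f := φ.toRingEquiv), ← span_range_pow_eq_map hφ,
      smul_eq_mul, map_mul]
    exact hmem _ ⟨i, (hφ i).symm⟩
  simpa using mul_card_le_of_mem_colon_X (s := Finset.univ.map (.inl : τ ↪ τ ⊕ ι))
    ((isHomogeneous_φ f d).mp hf) (by simpa using hmem') (by simpa using hnotMem)

end LinearForms

section Invariants

theorem colon_bot_mk {R : Type*} [CommRing R] (J : Ideal R) (f : R) :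
    (⊥ : Submodule R (R ⧸ J)).colon {Ideal.Quotient.mk J f} = J.colon {f} := by
  ext g
  rw [Submodule.mem_colon_singleton, Submodule.mem_colon_singleton, Submodule.mem_bot,
    ← Ideal.Quotient.eq_zero_iff_mem]
  rfl

theorem colon_singleton_mem_associatedPrimes {R : Type*} [CommRing R] {J : Ideal R} {f : R}
    (h : (J.colon {f}).IsPrime) : J.colon {f} ∈ associatedPrimes R (R ⧸ J) :=
  ⟨h, Ideal.Quotient.mk J f, by rw [colon_bot_mk, h.radical]⟩

variable {I : Ideal (MvPolynomial (Fin n) K)}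

theorem frobPow_span (p e : ℕ) [ExpChar K p] (s : Set (MvPolynomial (Fin n) K)) :
    frobPow (Ideal.span s) (p ^ e) = Ideal.span ((fun a => a ^ p ^ e) '' s) :=
  Ideal.map_span (iterateFrobenius (MvPolynomial (Fin n) K) p e) s

theorem mem_colon_and_notMem_of_isPrime_colon {q : ℕ} {f : MvPolynomial (Fin n) K}
    (h : ((frobPow I q).colon {f}).IsPrime) : f ∈ (frobPow I q).colon I ∧ f ∉ frobPow I q := by
  constructor
  · refine Submodule.mem_colon.mpr fun a ha => ?_
    have pow_mem : a ^ q ∈ frobPow I q := Ideal.subset_span ⟨a, ha, rfl⟩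
    have := Submodule.mem_colon_singleton.mp (h.mem_of_pow_mem q (Ideal.le_colon pow_mem))
    rwa [smul_eq_mul, mul_comm] at this
  · intro hf
    exact h.ne_top (by simpa using hf)

theorem alphaq_eq_of_isPrime_colon {q D : ℕ} {F : MvPolynomial (Fin n) K} (hF : F.IsHomogeneous D)
    (hcolon : ((frobPow I q).colon {F}).IsPrime)
    (hmin : ∀ (f : MvPolynomial (Fin n) K) (d : ℕ), f.IsHomogeneous d →
      f ∈ (frobPow I q).colon I → f ∉ frobPow I q → D ≤ d) :
    alphaq I q = D := by
  refine IsLeast.csInf_eq ⟨⟨F, hF, mem_colon_and_notMem_of_isPrime_colon hcolon⟩, ?_⟩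
  rintro d ⟨f, hf, hmem, hnotMem⟩
  exact hmin f d hf hmem hnotMem

theorem vnum_frobPow_eq_alphaq {q : ℕ} {F : MvPolynomial (Fin n) K}
    (hF : F.IsHomogeneous (alphaq I q)) (hcolon : ((frobPow I q).colon {F}).IsPrime) :
    vnum (frobPow I q) = alphaq I q := by
  refine IsLeast.csInf_eq
    ⟨⟨F, hF, _, colon_singleton_mem_associatedPrimes hcolon, Ideal.colon_span⟩, ?_⟩
  rintro d ⟨f, hf, 𝔭, h𝔭, rfl⟩
  have isPrime_colon := IsAssociatedPrime.isPrime h𝔭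
  rw [Ideal.colon_span] at isPrime_colon
  exact Nat.sInf_le ⟨f, hf, mem_colon_and_notMem_of_isPrime_colon isPrime_colon⟩

theorem heightI_eq_height [hI : I.IsPrime] : (heightI I : ℕ∞) = I.height := by
  obtain ⟨h, hh⟩ := ENat.ne_top_iff_exists.mp (Ideal.height_ne_top_of_isPrime (I := I))
  have Ass_eq : Ass I = {I} := by
    rw [Ass, associatedPrimes.eq_singleton_of_isPrimary hI.isPrimary, hI.radical]
  have heights_eq : {h : ℕ | ∃ 𝔭 ∈ Ass I, ∃ h𝔭 : 𝔭.IsPrime,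
      Order.height (⟨𝔭, h𝔭⟩ : PrimeSpectrum (MvPolynomial (Fin n) K)) = (h : ℕ∞)} = {h} := by
    ext k
    simp [Ass_eq, ← PrimeSpectrum.height_eq_orderHeight, hI, ← hh, eq_comm]
  rw [heightI, heights_eq, csInf_singleton, hh]

end Invariants

theorem stmt7 {K : Type*} [Field K] {n : ℕ} (p : ℕ) (hp : p.Prime) [CharP K p]
    {m : ℕ} (l : Fin m → MvPolynomial (Fin n) K) (hl : ∀ i, (l i).IsHomogeneous 1)
    (hli : LinearIndependent K l)
    (I : Ideal (MvPolynomial (Fin n) K)) (hI : I = Ideal.span (Set.range l))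
    (q : ℕ) (hq : ∃ e : ℕ, q = p ^ e) (hq1 : 1 < q) :
    vnum (frobPow I q) = alphaq I q ∧ alphaq I q = (q - 1) * m ∧
      (q - 1) * m = (q - 1) * heightI I := by
  subst hI
  obtain ⟨e, rfl⟩ := hq
  have := ExpChar.prime (R := K) hp
  have isPrime_I := isPrime_span_linearForms hl hli
  have frobPow_eq : frobPow (Ideal.span (Set.range l)) (p ^ e) =
      Ideal.span (Set.range fun i => l i ^ p ^ e) := by
    rw [frobPow_span, ← Set.range_comp, Function.comp_def]
  have isPrime_colon : ((frobPow (Ideal.span (Set.range l)) (p ^ e)).colon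
      {∏ i, l i ^ (p ^ e - 1)}).IsPrime := by
    rwa [frobPow_eq, colon_prod_linearForms_pow hl hli (by omega)]
  have isHomogeneous_prod : (∏ i, l i ^ (p ^ e - 1)).IsHomogeneous ((p ^ e - 1) * m) := by
    simpa [mul_comm] using IsHomogeneous.prod Finset.univ (fun i => l i ^ (p ^ e - 1))
      (fun _ => 1 * (p ^ e - 1)) fun i _ => (hl i).pow _
  have alphaq_eq : alphaq (Ideal.span (Set.range l)) (p ^ e) = (p ^ e - 1) * m := by
    refine alphaq_eq_of_isPrime_colon isHomogeneous_prod isPrime_colon fun f d hf hmem hnotMem => ?_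
    rw [frobPow_eq] at hmem hnotMem
    rw [Ideal.colon_span] at hmem
    simpa using mul_card_le_of_mem_colon_linearForms hl hli hf hmem hnotMem
  have heightI_eq : heightI (Ideal.span (Set.range l)) = m := by
    simpa [height_span_linearForms hl hli] using heightI_eq_height (I := Ideal.span (Set.range l))
  exact ⟨vnum_frobPow_eq_alphaq (alphaq_eq ▸ isHomogeneous_prod) isPrime_colon, alphaq_eq,
    by rw [heightI_eq]⟩

end
end

section
/- Let S = K[x_1,…,x_n] be a standard graded polynomial ring over a field K of prime characteristic p, and let I ⊂ S be a proper nonzero monomial ideal. Then for all q = p^e > 1, v(I^{[q]}) ≥ q·v(I) + (q−1)·height(I). -/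
open MvPolynomial

attribute [local instance] MvPolynomial.gradedAlgebra

noncomputable section

variable {K : Type*} [Field K] {n : ℕ}

/-!
Let `J = I.map (expand q)` be the ideal generated by the `q`-th powers of the monomials in `I`;
over a field of characteristic `p` and for `q = p ^ e` this is the Frobenius power. A monomial
`x ^ c` lies in `J` iff `x ^ ⌊c / q⌋` lies in `I`. The v-number of a monomial ideal is attained at
a monomial: if `J : f = 𝔭` is prime, then `𝔭` is generated by variables and `J : x ^ a = 𝔭` for
some monomial `x ^ a` of `f`. Then `I : x ^ ⌊a / q⌋ = 𝔭` as well, so `v(I) ≤ |⌊a / q⌋|`. If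
`x_i ∈ 𝔭`, multiplying by `x_i` moves `x ^ a` into `J`, hence changes `⌊a / q⌋`, so `a_i ≡ -1` mod
`q`. There are at least `height I` such variables, and therefore
`|a| = q * |⌊a / q⌋| + ∑ i, a_i % q ≥ q * v(I) + (q - 1) * height I`.
-/

section FloorDiv

variable {σ : Type*}

lemma smul_add_floorDiv {q : ℕ} (hq : 0 < q) (c a : σ →₀ ℕ) :
    (q • c + a) ⌊/⌋ q = c + a ⌊/⌋ q := by
  ext i
  simp [Nat.mul_add_div hq]

lemma add_single_one_floorDiv_of_dvd {q : ℕ} {a : σ →₀ ℕ} {i : σ} (h : q ∣ a i + 1) :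
    (a + Finsupp.single i 1) ⌊/⌋ q = a ⌊/⌋ q + Finsupp.single i 1 := by
  ext j
  obtain rfl | hij := eq_or_ne j i
  · simp [Nat.succ_div_of_dvd h]
  · simp [hij]

lemma add_single_one_floorDiv_of_not_dvd {q : ℕ} {a : σ →₀ ℕ} {i : σ} (h : ¬ q ∣ a i + 1) :
    (a + Finsupp.single i 1) ⌊/⌋ q = a ⌊/⌋ q := by
  ext j
  obtain rfl | hij := eq_or_ne j i
  · simp [Nat.succ_div_of_not_dvd h]
  · simp [hij]

lemma mul_degree_floorDiv_add_le_degree {q : ℕ} {a : σ →₀ ℕ} {A : Finset σ}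
    (hA : ∀ i ∈ A, q ∣ a i + 1) :
    q * (a ⌊/⌋ q).degree + (q - 1) * A.card ≤ a.degree := by
  classical
  have hle : q • (a ⌊/⌋ q) + ∑ i ∈ A, Finsupp.single i (q - 1) ≤ a := by
    intro i
    simp only [Finsupp.add_apply, Finsupp.smul_apply, Finsupp.floorDiv_apply, Nat.floorDiv_eq_div,
      smul_eq_mul, Finsupp.finsetSum_apply, Finsupp.single_apply, Finset.sum_ite_eq']
    split_ifs with hi
    · have hsucc : q * (a i / q + 1) = a i + 1 := by
        rw [← Nat.succ_div_of_dvd (hA i hi), Nat.mul_div_cancel' (hA i hi)]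
      rw [mul_add_one] at hsucc
      have hq : 0 < q := Nat.pos_of_dvd_of_pos (hA i hi) (Nat.succ_pos _)
      omega
    · exact Nat.mul_div_le (a i) q
  calc q * (a ⌊/⌋ q).degree + (q - 1) * A.card
      = (q • (a ⌊/⌋ q) + ∑ i ∈ A, Finsupp.single i (q - 1)).degree := by
        simp only [map_add, map_nsmul, map_sum, Finsupp.degree_single, Finset.sum_const,
          smul_eq_mul, mul_comm]
    _ ≤ a.degree := Finsupp.degree_mono hle

end FloorDiv

section Colon

variable {R : Type*} [CommRing R] {J : Ideal R} {f g u : R}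

lemma colon_span_singleton_eq_of_sub_mem (h : f - g ∈ J) :
    J.colon (Ideal.span {f}) = J.colon (Ideal.span {g}) := by
  ext r
  simp only [Ideal.mem_colon_span_singleton]
  rw [← sub_add_cancel f g, mul_add]
  exact J.add_mem_iff_right (J.mul_mem_left r h)

lemma colon_span_singleton_mul_of_notMem (hJ : (J.colon (Ideal.span {f})).IsPrime)
    (hu : u ∉ J.colon (Ideal.span {f})) :
    J.colon (Ideal.span {u * f}) = J.colon (Ideal.span {f}) := by
  ext r
  rw [Ideal.mem_colon_span_singleton, ← mul_assoc, ← Ideal.mem_colon_span_singleton]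
  exact ⟨fun h => (hJ.mem_or_mem h).resolve_right hu, fun h => Ideal.mul_mem_right u _ h⟩

lemma notMem_of_isPrime_colon (hJ : (J.colon (Ideal.span {f})).IsPrime) : f ∉ J := fun hf =>
  hJ.one_notMem (Ideal.mem_colon_span_singleton.2 (J.mul_mem_left 1 hf))

end Colon

section MonomialMembership

variable {σ R : Type*}

lemma mem_of_forall_monomial_mem [CommSemiring R] {J : Ideal (MvPolynomial σ R)}
    {g : MvPolynomial σ R} (h : ∀ c ∈ g.support, monomial c (1 : R) ∈ J) : g ∈ J := by
  rw [g.as_sum]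
  refine Ideal.sum_mem _ fun c hc => ?_
  rw [← mul_one (coeff c g), ← C_mul_monomial]
  exact J.mul_mem_left _ (h c hc)

lemma monomial_mem_colon_monomial [CommSemiring R] {J : Ideal (MvPolynomial σ R)} {a c : σ →₀ ℕ} :
    monomial c (1 : R) ∈ J.colon (Ideal.span {monomial a (1 : R)}) ↔
      monomial (c + a) (1 : R) ∈ J := by
  rw [Ideal.mem_colon_span_singleton, monomial_mul, one_mul]

lemma monomial_mem_iff_of_isPrime [CommSemiring R] {P : Ideal (MvPolynomial σ R)}
    (hP : P.IsPrime) {c : σ →₀ ℕ} :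
    monomial c (1 : R) ∈ P ↔ ∃ i, c i ≠ 0 ∧ X i ∈ P := by
  rw [monomial_eq, C_1, one_mul, Finsupp.prod, hP.prod_mem_iff]
  refine exists_congr fun i => ?_
  rw [Finsupp.mem_support_iff]
  exact and_congr_right fun hi => hP.pow_mem_iff_mem _ (Nat.pos_of_ne_zero hi)

lemma card_support_mul_le [CommSemiring R] (f g : MvPolynomial σ R) :
    (f * g).support.card ≤ f.support.card * g.support.card := by
  classical
  exact (Finset.card_le_card (support_mul f g)).trans Finset.card_add_le

lemma map_expand_span_monomial [CommSemiring R] (s : Set (σ →₀ ℕ)) (q : ℕ) :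
    (Ideal.span ((fun a => monomial a (1 : R)) '' s)).map (expand q) =
      Ideal.span ((fun a => monomial a (1 : R)) '' ((q • ·) '' s)) := by
  simp only [Ideal.map_span, Set.image_image, expand_monomial]

lemma support_sub_leadingTerm [CommRing R] [DecidableEq σ] (m : MonomialOrder σ)
    (f : MvPolynomial σ R) :
    (f - m.leadingTerm f).support = f.support.erase (m.degree f) := by
  ext d
  obtain rfl | hd := eq_or_ne d (m.degree f)
  · simp [MonomialOrder.leadingTerm, MonomialOrder.leadingCoeff]
  · simp [MonomialOrder.leadingTerm, coeff_monomial, hd, hd.symm]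

lemma card_support_sub_leadingTerm_lt [CommRing R] (m : MonomialOrder σ)
    {f : MvPolynomial σ R} (hf : f ≠ 0) :
    (f - m.leadingTerm f).support.card < f.support.card := by
  classical
  rw [support_sub_leadingTerm]
  exact Finset.card_erase_lt_of_mem (m.degree_mem_support hf)

lemma monomial_mem_of_forall_monomial_degree_mem [CommRing R] (m : MonomialOrder σ)
    {P : Ideal (MvPolynomial σ R)} (hP : ∀ g ∈ P, g ≠ 0 → monomial (m.degree g) (1 : R) ∈ P)
    {g : MvPolynomial σ R} (hg : g ∈ P) {c : σ →₀ ℕ} (hc : c ∈ g.support) :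
    monomial c (1 : R) ∈ P := by
  classical
  induction hk : g.support.card using Nat.strong_induction_on generalizing g with
  | _ k ih =>
    have hg0 : g ≠ 0 := by
      rintro rfl
      simp at hc
    have hlead : m.leadingTerm g ∈ P := by
      rw [MonomialOrder.leadingTerm, ← mul_one (m.leadingCoeff g), ← C_mul_monomial]
      exact P.mul_mem_left _ (hP g hg hg0)
    obtain rfl | hcd := eq_or_ne c (m.degree g)
    · exact hP g hg hg0
    · refine ih _ (hk ▸ card_support_sub_leadingTerm_lt m hg0) (P.sub_mem hg hlead) ?_ rfl
      rw [support_sub_leadingTerm]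
      exact Finset.mem_erase.2 ⟨hcd, hc⟩

end MonomialMembership

section MonomialIdeal

variable {I J P : Ideal (MvPolynomial (Fin n) K)} {f g : MvPolynomial (Fin n) K}
  {a c : Fin n →₀ ℕ}

lemma isMonomialIdeal_iff :
    IsMonomialIdeal J ↔ ∀ g ∈ J, ∀ c ∈ g.support, monomial c (1 : K) ∈ J := by
  constructor
  · rintro ⟨s, rfl⟩ g hg c hc
    rw [mem_ideal_span_monomial_image] at hg ⊢
    intro d hd
    obtain rfl := Finset.mem_singleton.1 (support_monomial_subset hd)
    exact hg d hc
  · refine fun h => ⟨{c | monomial c (1 : K) ∈ J}, le_antisymm (fun g hg => ?_) ?_⟩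
    · exact mem_of_forall_monomial_mem fun c hc =>
        Ideal.subset_span (Set.mem_image_of_mem _ (h g hg c hc))
    · rw [Ideal.span_le]
      rintro _ ⟨c, hc, rfl⟩
      exact hc

namespace IsMonomialIdeal

lemma monomial_mem (hJ : IsMonomialIdeal J) (hg : g ∈ J) (hc : c ∈ g.support) :
    monomial c (1 : K) ∈ J :=
  isMonomialIdeal_iff.1 hJ g hg c hc

lemma le_of_forall_monomial_mem (hI : IsMonomialIdeal I)
    (h : ∀ c, monomial c (1 : K) ∈ I → monomial c (1 : K) ∈ J) : I ≤ J :=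
  fun _ hg => mem_of_forall_monomial_mem fun c hc => h c (hI.monomial_mem hg hc)

lemma monomial_add_mem (hJ : IsMonomialIdeal J) (hc : c ∈ f.support)
    (h : monomial a 1 * f ∈ J) : monomial (a + c) (1 : K) ∈ J := by
  refine hJ.monomial_mem h ?_
  rw [mem_support_iff, coeff_monomial_mul, one_mul]
  exact mem_support_iff.1 hc

lemma colon_monomial (hJ : IsMonomialIdeal J) (a : Fin n →₀ ℕ) :
    IsMonomialIdeal (J.colon (Ideal.span {monomial a (1 : K)})) := by
  refine isMonomialIdeal_iff.2 fun g hg c hc => ?_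
  rw [Ideal.mem_colon_span_singleton, mul_comm] at hg
  rw [monomial_mem_colon_monomial, add_comm]
  exact hJ.monomial_add_mem hc hg

lemma eq_span_X_of_isPrime (hP : IsMonomialIdeal P) (hPp : P.IsPrime) :
    P = Ideal.span (X '' {i | X i ∈ P}) := by
  refine le_antisymm (fun g hg => ?_) ?_
  · exact mem_ideal_span_X_image.2 fun c hc => by
      obtain ⟨i, hci, hi⟩ := (monomial_mem_iff_of_isPrime hPp).1 (hP.monomial_mem hg hc)
      exact ⟨i, hi, hci⟩
  · rw [Ideal.span_le]
    rintro _ ⟨i, hi, rfl⟩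
    exact hi

end IsMonomialIdeal

end MonomialIdeal

section AssociatedPrimes

variable {J P : Ideal (MvPolynomial (Fin n) K)} {f : MvPolynomial (Fin n) K}

lemma mem_Ass_iff :
    P ∈ Ass J ↔ P.IsPrime ∧ ∃ f : MvPolynomial (Fin n) K, J.colon (Ideal.span {f}) = P := by
  have hcolon (f : MvPolynomial (Fin n) K) :
      (⊥ : Submodule (MvPolynomial (Fin n) K) (MvPolynomial (Fin n) K ⧸ J)).colon
        {Ideal.Quotient.mk J f} = J.colon (Ideal.span {f}) := by
    ext g
    rw [Submodule.mem_colon_singleton, Ideal.mem_colon_span_singleton, Submodule.mem_bot,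
      ← Ideal.Quotient.eq_zero_iff_mem, map_mul]
    rfl
  rw [Ass, AssociatedPrimes.mem_iff, isAssociatedPrime_iff,
    Ideal.Quotient.mk_surjective.exists]
  simp only [hcolon, eq_comm]

lemma exists_isPrime_colon (hJ : J ≠ ⊤) :
    ∃ f : MvPolynomial (Fin n) K, (J.colon (Ideal.span {f})).IsPrime := by
  have : Nontrivial (MvPolynomial (Fin n) K ⧸ J) := Ideal.Quotient.nontrivial_iff.2 hJ
  obtain ⟨P, hP⟩ := associatedPrimes.nonempty (MvPolynomial (Fin n) K)
    (MvPolynomial (Fin n) K ⧸ J)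
  obtain ⟨hPp, f, rfl⟩ := mem_Ass_iff.1 hP
  exact ⟨f, hPp⟩

namespace IsMonomialIdeal

/- Among the `f` with the given prime colon `P`, one with fewest terms works: if the leading
monomial `u` of some `g ∈ P` were not in `P`, then `u * f` would have the same colon, but up to a
scalar `u * leadingTerm f` is the leading term of `g * f ∈ J`, so it lies in `J` and can be
dropped. -/
lemma colon_of_isPrime (hJ : IsMonomialIdeal J)
    (hP : (J.colon (Ideal.span {f})).IsPrime) :
    IsMonomialIdeal (J.colon (Ideal.span {f})) := by
  let m : MonomialOrder (Fin n) := MonomialOrder.lex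
  induction hk : f.support.card using Nat.strong_induction_on generalizing f with
  | _ k ih =>
    by_cases hlead : ∀ g ∈ J.colon (Ideal.span {f}), g ≠ 0 →
        monomial (m.degree g) (1 : K) ∈ J.colon (Ideal.span {f})
    · exact isMonomialIdeal_iff.2 fun g hg c hc =>
        monomial_mem_of_forall_monomial_degree_mem m hlead hg hc
    push Not at hlead
    obtain ⟨g, hg, hg0, hu⟩ := hlead
    have hf0 : f ≠ 0 := by
      rintro rfl
      exact hu (by simp)
    set u : MvPolynomial (Fin n) K := monomial (m.degree g) 1
    have hdrop : u * f - u * (f - m.leadingTerm f) ∈ J := by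
      have hgf : monomial (m.degree (g * f)) (1 : K) ∈ J :=
        hJ.monomial_mem (Ideal.mem_colon_span_singleton.1 hg)
          (m.degree_mem_support (mul_ne_zero hg0 hf0))
      have : u * f - u * (f - m.leadingTerm f) =
          C (m.leadingCoeff f) * monomial (m.degree (g * f)) 1 := by
        rw [m.degree_mul hg0 hf0, ← mul_sub, sub_sub_cancel, MonomialOrder.leadingTerm,
          monomial_mul, C_mul_monomial, one_mul, mul_one]
      exact this ▸ J.mul_mem_left _ hgf
    have hcolon : J.colon (Ideal.span {u * (f - m.leadingTerm f)}) = J.colon (Ideal.span {f}) := by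
      rw [← colon_span_singleton_eq_of_sub_mem hdrop, colon_span_singleton_mul_of_notMem hP hu]
    have hcard : (u * (f - m.leadingTerm f)).support.card < k := by
      have hu1 : u.support.card ≤ 1 :=
        (Finset.card_le_card support_monomial_subset).trans (Finset.card_singleton _).le
      calc (u * (f - m.leadingTerm f)).support.card
          ≤ u.support.card * (f - m.leadingTerm f).support.card := card_support_mul_le _ _
        _ ≤ (f - m.leadingTerm f).support.card := mul_le_of_le_one_left (Nat.zero_le _) hu1
        _ < k := hk ▸ card_support_sub_leadingTerm_lt m hf0
    rw [← hcolon] at hP ⊢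
    exact ih _ hcard hP rfl

lemma exists_colon_monomial_eq (hJ : IsMonomialIdeal J)
    (hP : (J.colon (Ideal.span {f})).IsPrime) :
    ∃ a ∈ f.support, J.colon (Ideal.span {monomial a (1 : K)}) = J.colon (Ideal.span {f}) := by
  have hPm := hJ.colon_of_isPrime hP
  have hinf : (f.support.inf fun a => J.colon (Ideal.span {monomial a (1 : K)})) =
      J.colon (Ideal.span {f}) := by
    refine le_antisymm (fun g hg => ?_) (Finset.le_inf fun a ha =>
      hPm.le_of_forall_monomial_mem fun c hc => monomial_mem_colon_monomial.2
        (hJ.monomial_add_mem ha (Ideal.mem_colon_span_singleton.1 hc)))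
    rw [Ideal.mem_colon_span_singleton, f.as_sum, Finset.mul_sum]
    refine J.sum_mem fun a ha => ?_
    have hga : g * monomial a 1 ∈ J :=
      Ideal.mem_colon_span_singleton.1 ((Submodule.mem_finsetInf.1 hg) a ha)
    rw [← mul_one (coeff a f), ← C_mul_monomial, mul_left_comm]
    exact J.mul_mem_left _ hga
  obtain ⟨a, ha, haP⟩ := Ideal.eq_inf_of_isPrime_inf (hinf.symm ▸ hP)
  exact ⟨a, ha, haP.trans hinf⟩

end IsMonomialIdeal

end AssociatedPrimes

section Invariants

variable {I P : Ideal (MvPolynomial (Fin n) K)}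

lemma vnum_le_of_isHomogeneous {f : MvPolynomial (Fin n) K} {d : ℕ} (hf : f.IsHomogeneous d)
    (hP : (I.colon (Ideal.span {f})).IsPrime) : vnum I ≤ d :=
  Nat.sInf_le ⟨f, hf, _, mem_Ass_iff.2 ⟨hP, f, rfl⟩, rfl⟩

lemma IsMonomialIdeal.exists_degree_eq_vnum (hI : IsMonomialIdeal I) (htop : I ≠ ⊤) :
    ∃ a : Fin n →₀ ℕ, a.degree = vnum I ∧
      (I.colon (Ideal.span {monomial a (1 : K)})).IsPrime := by
  have hne : {d : ℕ | ∃ f : MvPolynomial (Fin n) K, f.IsHomogeneous d ∧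
      ∃ 𝔭 ∈ Ass I, I.colon (Ideal.span {f}) = 𝔭}.Nonempty := by
    obtain ⟨f, hf⟩ := exists_isPrime_colon htop
    obtain ⟨a, -, ha⟩ := hI.exists_colon_monomial_eq hf
    exact ⟨a.degree, monomial a 1, isHomogeneous_monomial _ rfl, _,
      mem_Ass_iff.2 ⟨hf, f, rfl⟩, ha⟩
  obtain ⟨f, hfd, P, hP, rfl⟩ := Nat.sInf_mem hne
  have hPp := (mem_Ass_iff.1 hP).1
  obtain ⟨a, haf, ha⟩ := hI.exists_colon_monomial_eq hPp
  refine ⟨a, ?_, ha ▸ hPp⟩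
  rw [Finsupp.degree_eq_weight_one (R := ℕ)]
  exact hfd (mem_support_iff.1 haf)

lemma heightI_le_height (hP : P ∈ Ass I) : (heightI I : ℕ∞) ≤ P.height := by
  have hPp := (mem_Ass_iff.1 hP).1
  obtain ⟨h, hh⟩ := ENat.ne_top_iff_exists.1 (P.height_ne_top hPp.ne_top)
  rw [← hh, Nat.cast_le]
  refine Nat.sInf_le ⟨P, hP, hPp, ?_⟩
  rw [hh]
  exact (PrimeSpectrum.height_eq_orderHeight ⟨P, hPp⟩).symm

lemma IsMonomialIdeal.height_le_ncard (hP : IsMonomialIdeal P) (hPp : P.IsPrime) :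
    P.height ≤ {i | X i ∈ P}.ncard := by
  refine (P.height_le_spanFinrank hPp.ne_top).trans (Nat.cast_le.2 ?_)
  conv_lhs => rw [hP.eq_span_X_of_isPrime hPp]
  exact (Submodule.spanFinrank_span_le_ncard_of_finite (Set.toFinite _)).trans
    (Set.ncard_image_le (Set.toFinite _))

end Invariants

section Expand

variable {I : Ideal (MvPolynomial (Fin n) K)} {a : Fin n →₀ ℕ} {i : Fin n} {q : ℕ}

namespace IsMonomialIdeal

lemma map_expand (hI : IsMonomialIdeal I) (q : ℕ) : IsMonomialIdeal (I.map (expand q)) := by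
  obtain ⟨s, rfl⟩ := hI
  exact ⟨_, map_expand_span_monomial s q⟩

lemma frobPow_eq_map_expand (hI : IsMonomialIdeal I) (p : ℕ) [ExpChar K p] (e : ℕ) :
    frobPow I (p ^ e) = I.map (expand (p ^ e)) := by
  obtain ⟨s, rfl⟩ := hI
  change Ideal.map (iterateFrobenius (MvPolynomial (Fin n) K) p e) _ = _
  rw [Ideal.map_span, Ideal.map_span, Set.image_image, Set.image_image]
  simp only [iterateFrobenius_def, monomial_pow, one_pow, expand_monomial]

lemma monomial_mem_map_expand_iff (hI : IsMonomialIdeal I) (hq : 0 < q) :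
    monomial a (1 : K) ∈ I.map (expand q) ↔ monomial (a ⌊/⌋ q) (1 : K) ∈ I := by
  obtain ⟨s, rfl⟩ := hI
  rw [map_expand_span_monomial]
  simp [mem_ideal_span_monomial_image, le_floorDiv_iff_smul_le hq]

lemma map_expand_ne_top (hI : IsMonomialIdeal I) (htop : I ≠ ⊤) (hq : 0 < q) :
    I.map (expand q) ≠ ⊤ := by
  rw [Ideal.ne_top_iff_one] at htop ⊢
  change monomial 0 (1 : K) ∉ _
  rwa [hI.monomial_mem_map_expand_iff hq, zero_floorDiv]

lemma monomial_add_single_floorDiv_mem (hI : IsMonomialIdeal I) (hq : 0 < q)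
    (hi : X i ∈ (I.map (expand q)).colon (Ideal.span {monomial a (1 : K)})) :
    monomial ((a + Finsupp.single i 1) ⌊/⌋ q) (1 : K) ∈ I := by
  rw [← hI.monomial_mem_map_expand_iff hq, add_comm]
  exact monomial_mem_colon_monomial.1 hi

lemma dvd_add_one_of_X_mem_colon (hI : IsMonomialIdeal I) (hq : 0 < q)
    (ha : monomial a (1 : K) ∉ I.map (expand q))
    (hi : X i ∈ (I.map (expand q)).colon (Ideal.span {monomial a (1 : K)})) :
    q ∣ a i + 1 := by
  by_contra hndvd
  rw [hI.monomial_mem_map_expand_iff hq, ← add_single_one_floorDiv_of_not_dvd hndvd] at ha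
  exact ha (hI.monomial_add_single_floorDiv_mem hq hi)

lemma X_mem_colon_floorDiv (hI : IsMonomialIdeal I) (hq : 0 < q)
    (ha : monomial a (1 : K) ∉ I.map (expand q))
    (hi : X i ∈ (I.map (expand q)).colon (Ideal.span {monomial a (1 : K)})) :
    X i ∈ I.colon (Ideal.span {monomial (a ⌊/⌋ q) (1 : K)}) := by
  refine monomial_mem_colon_monomial.2 ?_
  rw [add_comm, ← add_single_one_floorDiv_of_dvd (hI.dvd_add_one_of_X_mem_colon hq ha hi)]
  exact hI.monomial_add_single_floorDiv_mem hq hi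

lemma colon_floorDiv_eq (hI : IsMonomialIdeal I) (hq : 0 < q)
    (hP : ((I.map (expand q)).colon (Ideal.span {monomial a (1 : K)})).IsPrime) :
    I.colon (Ideal.span {monomial (a ⌊/⌋ q) (1 : K)}) =
      (I.map (expand q)).colon (Ideal.span {monomial a (1 : K)}) := by
  apply le_antisymm
  · refine (hI.colon_monomial _).le_of_forall_monomial_mem fun c hc => hP.mem_of_pow_mem q ?_
    rw [monomial_pow, one_pow, monomial_mem_colon_monomial, hI.monomial_mem_map_expand_iff hq,
      smul_add_floorDiv hq]
    exact monomial_mem_colon_monomial.1 hc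
  · rw [((hI.map_expand q).colon_monomial a).eq_span_X_of_isPrime hP, Ideal.span_le]
    rintro _ ⟨i, hi, rfl⟩
    exact hI.X_mem_colon_floorDiv hq (notMem_of_isPrime_colon hP) hi

end IsMonomialIdeal

end Expand

theorem stmt10_general {K : Type*} [Field K] {n : ℕ} (I : Ideal (MvPolynomial (Fin n) K))
    (hmon : IsMonomialIdeal I) (htop : I ≠ ⊤) {q : ℕ} (hq : 0 < q) :
    q * vnum I + (q - 1) * heightI I ≤ vnum (I.map (expand q)) := by
  classical
  obtain ⟨a, ha, hP⟩ :=
    (hmon.map_expand q).exists_degree_eq_vnum (hmon.map_expand_ne_top htop hq)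
  set P := (I.map (expand q)).colon (Ideal.span {monomial a (1 : K)})
  have hcolon : I.colon (Ideal.span {monomial (a ⌊/⌋ q) (1 : K)}) = P :=
    hmon.colon_floorDiv_eq hq hP
  have hPm : IsMonomialIdeal P := (hmon.map_expand q).colon_monomial a
  have hv : vnum I ≤ (a ⌊/⌋ q).degree :=
    vnum_le_of_isHomogeneous (isHomogeneous_monomial 1 rfl) (hcolon ▸ hP)
  have hht : heightI I ≤ {i | X i ∈ P}.toFinset.card := by
    rw [← Set.ncard_eq_toFinset_card']
    exact_mod_cast (heightI_le_height (mem_Ass_iff.2 ⟨hP, _, hcolon⟩)).trans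
      (hPm.height_le_ncard hP)
  have hdvd : ∀ i ∈ {i | X i ∈ P}.toFinset, q ∣ a i + 1 := fun i hi =>
    hmon.dvd_add_one_of_X_mem_colon hq (notMem_of_isPrime_colon hP)
      (Set.mem_toFinset (s := {i | X i ∈ P}).1 hi)
  calc q * vnum I + (q - 1) * heightI I
      ≤ q * (a ⌊/⌋ q).degree + (q - 1) * {i | X i ∈ P}.toFinset.card := by gcongr
    _ ≤ a.degree := mul_degree_floorDiv_add_le_degree hdvd
    _ = vnum (I.map (expand q)) := ha

theorem stmt10 {K : Type*} [Field K] {n : ℕ} (p : ℕ) (hp : p.Prime) [CharP K p]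
    (I : Ideal (MvPolynomial (Fin n) K)) (hmon : IsMonomialIdeal I) (htop : I ≠ ⊤) (hbot : I ≠ ⊥)
    (q : ℕ) (hq : ∃ e : ℕ, q = p ^ e) (hq1 : 1 < q) :
    q * vnum I + (q - 1) * heightI I ≤ vnum (frobPow I q) := by
  have := ExpChar.prime (R := K) hp
  obtain ⟨e, rfl⟩ := hq
  rw [hmon.frobPow_eq_map_expand p e]
  exact stmt10_general I hmon htop (Nat.zero_lt_of_lt hq1)

end
end

section
/- Let S = K[x_1,…,x_n] be a standard graded polynomial ring over a field K of prime characteristic p, and let I ⊂ S be a proper nonzero graded ideal. Then the limit of the sequence e ↦ v(I^{[p^e]})/p^e as e → ∞ exists (the sequence converges to a real number). -/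
open MvPolynomial

attribute [local instance] MvPolynomial.gradedAlgebra

noncomputable section

variable {K : Type*} [Field K] {n : ℕ}

/-!
The Frobenius endomorphism of a polynomial ring over a field is free, so taking Frobenius powers
commutes with colon ideals. Two facts follow. First, `Ass(I^[q]) ⊆ Ass(I)`; in particular only
finitely many primes occur for all `q`. Second, if `(J : f) = 𝔭` and `(𝔭^[p] : g) = 𝔭`, then
`(J^[p] : f^p g) = (𝔭^[p] : g) = 𝔭`. With `J = I^[q]`, `f` of degree `v(J)` and `g` of least
possible degree this gives `v(I^[pq]) ≤ p v(I^[q]) + C`, where `C` bounds the degrees of the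
finitely many `g`. Hence `v(I^[q]) / q + C / ((p - 1) q)` decreases, and its second term tends
to `0`.
-/

section FreeHom

variable {R A B : Type*} [CommRing R] [CommRing A] [CommRing B]

/-- A ring homomorphism `φ : R →+* A` is free if it makes `A` a free `R`-module. This is a property
of `φ`, not of an `Algebra R A` instance, because it is applied to the Frobenius endomorphism of a
ring `R`, which already is an algebra over itself. -/
def IsFreeHom (φ : R →+* A) : Prop :=
  letI := φ.toAlgebra
  Module.Free R A

theorem isFreeHom_of_field {K : Type*} [Field K] (φ : K →+* A) : IsFreeHom φ :=
  letI := φ.toAlgebra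
  Module.Free.of_divisionRing K A

theorem IsFreeHom.comp {φ : R →+* A} {ψ : A →+* B} (hφ : IsFreeHom φ) (hψ : IsFreeHom ψ) :
    IsFreeHom (ψ.comp φ) := by
  algebraize_only [φ, ψ, ψ.comp φ]
  have : Module.Free R A := hφ
  have : Module.Free A B := hψ
  exact Module.Free.trans (S := A)

theorem IsFreeHom.of_bijective {φ : R →+* A} {ι : Type*} (v : ι → A)
    (hv : Function.Bijective fun c : ι →₀ R ↦ c.sum fun i r ↦ φ r * v i) : IsFreeHom φ := by
  algebraize_only [φ]
  have hv' : Function.Bijective (Finsupp.linearCombination R v) := by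
    convert! hv using 2
  exact Module.Free.of_equiv (LinearEquiv.ofBijective _ hv')

attribute [local instance] MvPolynomial.algebraMvPolynomial in
theorem IsFreeHom.mvPolynomialMap {φ : R →+* A} (hφ : IsFreeHom φ) (σ : Type*) :
    IsFreeHom (map (σ := σ) φ) := by
  algebraize_only [φ]
  have : Module.Free R A := hφ
  have free : Module.Free (MvPolynomial σ R) (MvPolynomial σ A) :=
    IsBaseChange.free (Algebra.IsPushout.out (R := R) (R' := A))
  exact free

/-- Division with remainder by `q` of exponent vectors. It rewrites the monomial basis of a
polynomial ring as the products of the monomials with exponents below `q` and the `q`-th powers of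
monomials. -/
def exponentDivMod (σ : Type*) {q : ℕ} (hq : 0 < q) :
    {a : σ →₀ ℕ // ∀ i, a i < q} × (σ →₀ ℕ) ≃ (σ →₀ ℕ) where
  toFun x := x.1 + q • x.2
  invFun v := (⟨v.mapRange (· % q) q.zero_mod, fun i ↦ Nat.mod_lt (v i) hq⟩,
    v.mapRange (· / q) q.zero_div)
  left_inv x := by
    ext i
    · simp [Nat.mod_eq_of_lt (x.1.2 i)]
    · simp [Nat.add_mul_div_left _ _ hq, Nat.div_eq_of_lt (x.1.2 i)]
  right_inv v := by
    ext i
    simp [Nat.mod_add_div]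

variable (R) in
theorem isFreeHom_expand (σ : Type*) {q : ℕ} (hq : 0 < q) :
    IsFreeHom (expand q : MvPolynomial σ R →ₐ[R] MvPolynomial σ R).toRingHom := by
  let E := exponentDivMod σ hq
  let combine : ({a : σ →₀ ℕ // ∀ i, a i < q} →₀ MvPolynomial σ R) →ₗ[R] MvPolynomial σ R :=
    Finsupp.lsum R fun a ↦ LinearMap.mulRight R (monomial a 1) ∘ₗ (expand q).toLinearMap
  have combine_basis (x) : combine (Finsupp.basis (fun _ ↦ basisMonomials σ R)
      ((Equiv.sigmaEquivProd _ _).symm x)) = basisMonomials σ R (E x) := by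
    simp [combine, E, exponentDivMod, monomial_mul, add_comm]
  let monomialEquiv := (Finsupp.basis fun _ ↦ basisMonomials σ R).equiv (basisMonomials σ R)
    ((Equiv.sigmaEquivProd _ _).trans E)
  have combine_eq : combine = monomialEquiv :=
    (Finsupp.basis fun _ ↦ basisMonomials σ R).ext fun x ↦ by
      rw [LinearEquiv.coe_coe, Module.Basis.equiv_apply]
      exact combine_basis (x.1, x.2)
  exact IsFreeHom.of_bijective (fun a : {a : σ →₀ ℕ // ∀ i, a i < q} ↦ monomial a.1 1)
    (show Function.Bijective combine from combine_eq ▸ monomialEquiv.bijective)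

end FreeHom

theorem IsFreeHom.iterateFrobenius_mvPolynomial {R : Type*} [CommRing R] {p : ℕ} [ExpChar R p]
    {e : ℕ} (h : IsFreeHom (iterateFrobenius R p e)) (σ : Type*) :
    IsFreeHom (iterateFrobenius (MvPolynomial σ R) p e) := by
  have factor : iterateFrobenius (MvPolynomial σ R) p e =
      (map (iterateFrobenius R p e)).comp (expand (p ^ e)).toRingHom :=
    RingHom.ext fun f ↦ (map_iterateFrobenius_expand p f e).symm
  rw [factor]
  exact (isFreeHom_expand R σ (expChar_pow_pos R p e)).comp (h.mvPolynomialMap σ)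

section Colon

variable {R A : Type*} [CommRing R] [CommRing A]

theorem mem_map_algebraMap_iff_forall_repr_mem [Algebra R A] {ι : Type*} (b : Module.Basis ι R A)
    {I : Ideal R} {x : A} : x ∈ I.map (algebraMap R A) ↔ ∀ i, b.repr x i ∈ I := by
  constructor
  · rw [← Submodule.restrictScalars_mem R, ← Ideal.smul_top_eq_map]
    intro hx i
    refine Submodule.smul_induction_on hx (fun r hr y _ ↦ ?_) fun y z hy hz ↦ ?_
    · simpa using I.mul_mem_right _ hr
    · simpa using I.add_mem hy hz
  · intro hx
    rw [← b.linearCombination_repr x, Finsupp.linearCombination_apply]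
    refine Ideal.sum_mem _ fun i _ ↦ ?_
    simpa only [Algebra.smul_def] using Ideal.mul_mem_right _ _ (Ideal.mem_map_of_mem _ (hx i))

theorem IsFreeHom.map_colon {φ : R →+* A} (hφ : IsFreeHom φ) (I : Ideal R) (s : Set R) :
    (I.colon s).map φ = (I.map φ).colon (φ '' s) := by
  algebraize_only [φ]
  have : Module.Free R A := hφ
  let b := Module.Free.chooseBasis R A
  have repr_smul (a : R) (x : A) (i) : b.repr (x • φ a) i = b.repr x i • a := by
    rw [smul_eq_mul, mul_comm, ← RingHom.algebraMap_toAlgebra φ, ← Algebra.smul_def]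
    simp [mul_comm]
  ext x
  change x ∈ (I.colon s).map (algebraMap R A) ↔ x ∈ (I.map (algebraMap R A)).colon _
  simp only [Submodule.mem_colon, Set.forall_mem_image, mem_map_algebraMap_iff_forall_repr_mem b,
    repr_smul]
  exact ⟨fun h a ha i ↦ h i a ha, fun h i a ha ↦ h ha i⟩

theorem IsFreeHom.map_colon_coe {φ : R →+* A} (hφ : IsFreeHom φ) (I J : Ideal R) :
    (I.colon J).map φ = (I.map φ).colon (J.map φ) :=
  (hφ.map_colon I J).trans Ideal.colon_span.symm

theorem IsFreeHom.colon_map_mul {φ : R →+* A} (hφ : IsFreeHom φ) (I : Ideal R) (f : R) (g : A) :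
    (I.map φ).colon {φ f * g} = ((I.colon {f}).map φ).colon {g} := by
  ext a
  simp only [hφ.map_colon, Set.image_singleton, Submodule.mem_colon_singleton, smul_eq_mul]
  rw [mul_assoc, mul_comm g]

theorem exists_mem_colon_singleton_le {I J P : Ideal R} [hP : P.IsPrime] (hJ : J.FG)
    (h : I.colon J ≤ P) : ∃ f ∈ J, I.colon {f} ≤ P := by
  obtain ⟨s, rfl⟩ := hJ
  have hinf : s.inf (fun f ↦ I.colon {f}) ≤ P := by
    refine le_trans (fun a ha ↦ ?_) h
    simpa [Ideal.colon_span, Submodule.mem_colon] using ha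
  obtain ⟨f, hf, hfP⟩ := hP.inf_le'.1 hinf
  exact ⟨f, Ideal.subset_span hf, hfP⟩

theorem mem_associatedPrimes_quotient_iff [IsNoetherianRing R] {I P : Ideal R} :
    P ∈ associatedPrimes R (R ⧸ I) ↔ P.IsPrime ∧ ∃ f, I.colon {f} = P := by
  have bot_colon_mk (f : R) :
      (⊥ : Submodule R (R ⧸ I)).colon {Ideal.Quotient.mk I f} = I.colon {f} := by
    ext a
    rw [Submodule.mem_colon_singleton, Submodule.mem_colon_singleton, Submodule.mem_bot,
      ← Ideal.Quotient.eq_zero_iff_mem]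
    rfl
  rw [AssociatedPrimes.mem_iff, isAssociatedPrime_iff,
    Ideal.Quotient.mk_surjective.exists]
  simp only [bot_colon_mk, eq_comm]

end Colon

section Frobenius

variable {R : Type*} [CommRing R] {p e : ℕ} [ExpChar R p]

theorem map_iterateFrobenius_le (I : Ideal R) : I.map (iterateFrobenius R p e) ≤ I :=
  Ideal.map_le_iff_le_comap.2 fun _ ha ↦ I.pow_mem_of_mem ha _ (expChar_pow_pos R p e)

theorem IsFreeHom.colon_map_iterateFrobenius_le (hF : IsFreeHom (iterateFrobenius R p e))
    {P : Ideal R} [hP : P.IsPrime] {g : R} (hg : g ∉ P.map (iterateFrobenius R p e)) :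
    (P.map (iterateFrobenius R p e)).colon {g} ≤ P := by
  intro a ha
  by_contra haP
  have colon_eq : P.colon {a} = P := by
    ext b
    simp [hP.mul_mem_iff_mem_or_mem, haP]
  have colon_map_eq : (P.map (iterateFrobenius R p e)).colon {iterateFrobenius R p e a} =
      P.map (iterateFrobenius R p e) := by
    rw [← Set.image_singleton, ← hF.map_colon, colon_eq]
  rw [← colon_map_eq, Submodule.mem_colon_singleton, smul_eq_mul, mul_comm] at hg
  refine hg (Ideal.mem_of_dvd _ (mul_dvd_mul_right ?_ g) (Submodule.mem_colon_singleton.1 ha))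
  exact dvd_pow_self a (expChar_pow_pos R p e).ne'

theorem IsFreeHom.associatedPrimes_map_iterateFrobenius_subset [IsNoetherianRing R]
    (hF : IsFreeHom (iterateFrobenius R p e)) (I : Ideal R) :
    associatedPrimes R (R ⧸ I.map (iterateFrobenius R p e)) ⊆ associatedPrimes R (R ⧸ I) := by
  -- `P = (I^[q] : x)` gives `x ∈ (I : P)^[q]`, so `(I : (I : P)) ≤ P`, and `P` is the colon of `I`
  -- by one of the generators of `(I : P)`.
  intro P hP
  obtain ⟨hprime, x, hx⟩ := mem_associatedPrimes_quotient_iff.1 hP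
  have x_mem : x ∈ (I.colon P).map (iterateFrobenius R p e) := by
    rw [hF.map_colon_coe, Submodule.mem_colon]
    intro b hb
    have b_mem : b ∈ P := map_iterateFrobenius_le P hb
    rwa [← hx, Submodule.mem_colon_singleton, smul_eq_mul, mul_comm] at b_mem
  have colon_colon_le : I.colon (I.colon P) ≤ P := by
    intro s hs
    have mem_colon_map : iterateFrobenius R p e s ∈ (I.map (iterateFrobenius R p e)).colon
        ((I.colon P).map (iterateFrobenius R p e)) := by
      rw [← hF.map_colon_coe]
      exact Ideal.mem_map_of_mem _ hs
    refine hprime.mem_of_pow_mem (p ^ e) ?_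
    rw [← hx, Submodule.mem_colon_singleton]
    exact Submodule.mem_colon.1 mem_colon_map x x_mem
  obtain ⟨f, hf, hle⟩ := exists_mem_colon_singleton_le (IsNoetherian.noetherian _) colon_colon_le
  refine mem_associatedPrimes_quotient_iff.2 ⟨hprime, f, hle.antisymm fun a ha ↦ ?_⟩
  have := Submodule.mem_colon.1 hf a ha
  rwa [Submodule.mem_colon_singleton, smul_eq_mul, mul_comm]

end Frobenius

section Graded

variable {ι R σ : Type*} [CommRing R] [SetLike σ R] [AddSubmonoidClass σ R] {𝒜 : ι → σ}

section AddMonoid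

variable [DecidableEq ι] [AddMonoid ι] [GradedRing 𝒜] {I J : Ideal R}

theorem isHomogeneous_colon_singleton [IsRightCancelAdd ι] (hI : I.IsHomogeneous 𝒜) {f : R}
    (hf : SetLike.IsHomogeneousElem 𝒜 f) : (I.colon {f}).IsHomogeneous 𝒜 := by
  let : AddRightCancelMonoid ι := { ‹AddMonoid ι›, ‹IsRightCancelAdd ι› with }
  obtain ⟨d, hd⟩ := hf
  intro i a ha
  rw [Submodule.mem_colon_singleton, smul_eq_mul] at ha ⊢
  simpa only [DirectSum.coe_decompose_mul_add_of_right_mem 𝒜 hd] using hI (i + d) ha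

theorem exists_isHomogeneousElem_mem_notMem (hI : I.IsHomogeneous 𝒜) (h : ¬ I ≤ J) :
    ∃ g, SetLike.IsHomogeneousElem 𝒜 g ∧ g ∈ I ∧ g ∉ J := by
  classical
  contrapose! h
  intro x hx
  rw [← DirectSum.sum_support_decompose 𝒜 x]
  exact J.sum_mem fun i _ ↦ h _ (SetLike.isHomogeneousElem_coe _) (hI i hx)

theorem isHomogeneous_pow (hI : I.IsHomogeneous 𝒜) (k : ℕ) : (I ^ k).IsHomogeneous 𝒜 := by
  induction k with
  | zero => simpa only [pow_zero, Ideal.one_eq_top] using Ideal.IsHomogeneous.top 𝒜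
  | succ k ih => simpa only [pow_succ] using ih.mul hI

theorem isHomogeneous_map_iterateFrobenius {p e : ℕ} [ExpChar R p] (hI : I.IsHomogeneous 𝒜) :
    (I.map (iterateFrobenius R p e)).IsHomogeneous 𝒜 := by
  obtain ⟨s, rfl⟩ := (Ideal.IsHomogeneous.iff_exists 𝒜 I).1 hI
  rw [Ideal.map_span]
  refine Ideal.homogeneous_span 𝒜 _ ?_
  rintro _ ⟨_, ⟨⟨x, i, hx⟩, -, rfl⟩, rfl⟩
  exact ⟨p ^ e • i, SetLike.pow_mem_graded (p ^ e) hx⟩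

theorem exists_colon_map_iterateFrobenius_eq {p e : ℕ} [ExpChar R p]
    (hF : IsFreeHom (iterateFrobenius R p e)) {P : Ideal R} [hP : P.IsPrime]
    (hP_fg : P.FG) (hP_hom : P.IsHomogeneous 𝒜) :
    ∃ g, SetLike.IsHomogeneousElem 𝒜 g ∧ (P.map (iterateFrobenius R p e)).colon {g} = P := by
  classical
  let Q := P.map (iterateFrobenius R p e)
  have P_le_radical : P ≤ Q.radical := fun a ha ↦ ⟨p ^ e, Ideal.mem_map_of_mem _ ha⟩
  have exists_pow_le : ∃ k, P ^ k ≤ Q :=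
    Ideal.exists_pow_le_of_le_radical_of_fg P_le_radical hP_fg
  obtain ⟨k, hk⟩ : ∃ k, Nat.find exists_pow_le = k + 1 := by
    refine Nat.exists_eq_succ_of_ne_zero fun h ↦ hP.ne_top ?_
    have top_le : P ^ 0 ≤ Q := (Nat.find_eq_zero exists_pow_le).1 h
    rw [pow_zero, Ideal.one_eq_top] at top_le
    exact top_le_iff.1 (top_le.trans (map_iterateFrobenius_le P))
  have pow_succ_le : P ^ (k + 1) ≤ Q := hk ▸ Nat.find_spec exists_pow_le
  have not_pow_le : ¬ P ^ k ≤ Q := Nat.find_min exists_pow_le (by omega)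
  obtain ⟨g, g_hom, g_mem, g_notMem⟩ :=
    exists_isHomogeneousElem_mem_notMem (isHomogeneous_pow hP_hom k) not_pow_le
  refine ⟨g, g_hom, (hF.colon_map_iterateFrobenius_le g_notMem).antisymm fun a ha ↦ ?_⟩
  rw [Submodule.mem_colon_singleton, smul_eq_mul]
  exact pow_succ_le (by rw [pow_succ']; exact Ideal.mul_mem_mul ha g_mem)

end AddMonoid

theorem exists_isPrime_colon_singleton [AddCommMonoid ι] [LinearOrder ι]
    [IsOrderedCancelAddMonoid ι] [GradedRing 𝒜] [IsNoetherianRing R] {I : Ideal R}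
    (hI : I.IsHomogeneous 𝒜) (hne : I ≠ ⊤) :
    ∃ f, SetLike.IsHomogeneousElem 𝒜 f ∧ (I.colon {f}).IsPrime := by
  let 𝒞 : Set (Ideal R) := {J | ∃ f, SetLike.IsHomogeneousElem 𝒜 f ∧ f ∉ I ∧ J = I.colon {f}}
  have h𝒞 : 𝒞.Nonempty :=
    ⟨_, 1, SetLike.isHomogeneousElem_one 𝒜, (Ideal.ne_top_iff_one I).1 hne, rfl⟩
  obtain ⟨_, ⟨f, f_hom, hf, rfl⟩, hmax⟩ := set_has_maximal_iff_noetherian.2 inferInstance 𝒞 h𝒞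
  refine ⟨f, f_hom, (isHomogeneous_colon_singleton hI f_hom).isPrime_of_homogeneous_mem_or_mem
    ?_ fun {a b} _ b_hom hab ↦ ?_⟩
  · simpa [Submodule.colon_eq_top_iff_subset] using hf
  · simp only [Submodule.mem_colon_singleton, smul_eq_mul] at hab ⊢
    by_contra! ⟨haf, hbf⟩
    have colon_le : I.colon {f} ≤ I.colon {b * f} := fun x hx ↦ by
      rw [Submodule.mem_colon_singleton, smul_eq_mul] at hx ⊢
      rw [mul_left_comm]
      exact I.mul_mem_left b hx
    have colon_lt : I.colon {f} < I.colon {b * f} := by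
      refine lt_of_le_not_ge colon_le fun h ↦ haf ?_
      have : a ∈ I.colon {b * f} := by
        rwa [Submodule.mem_colon_singleton, smul_eq_mul, ← mul_assoc]
      simpa using h this
    exact hmax _ ⟨b * f, b_hom.mul f_hom, hbf, rfl⟩ colon_lt

end Graded

section VNumber

variable {p e : ℕ} [ExpChar K p] {I : Ideal (MvPolynomial (Fin n) K)}

variable (K n p e) in
theorem isFreeHom_iterateFrobenius : IsFreeHom (iterateFrobenius (MvPolynomial (Fin n) K) p e) :=
  (isFreeHom_of_field _).iterateFrobenius_mvPolynomial _

variable (p e I) in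
theorem frobPow_eq_map : frobPow I (p ^ e) = I.map (iterateFrobenius _ p e) :=
  rfl

theorem frobPow_frobPow (d : ℕ) :
    frobPow (frobPow I (p ^ d)) (p ^ e) = frobPow I (p ^ (d + e)) := by
  rw [frobPow_eq_map, frobPow_eq_map, frobPow_eq_map, Ideal.map_map, add_comm, iterateFrobenius_add]

theorem frobPow_ne_top (hI : I ≠ ⊤) : frobPow I (p ^ e) ≠ ⊤ :=
  ne_top_of_le_ne_top hI (map_iterateFrobenius_le I)

theorem Ass_frobPow_subset : Ass (frobPow I (p ^ e)) ⊆ Ass I :=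
  (isFreeHom_iterateFrobenius K n p e).associatedPrimes_map_iterateFrobenius_subset I

theorem exists_isHomogeneous_vnum (hI : IsGraded I) (hne : I ≠ ⊤) :
    ∃ f : MvPolynomial (Fin n) K, f.IsHomogeneous (vnum I) ∧
      ∃ 𝔭 ∈ Ass I, I.colon (Ideal.span {f}) = 𝔭 := by
  obtain ⟨f, ⟨d, hd⟩, hprime⟩ := exists_isPrime_colon_singleton hI hne
  have degrees_nonempty : {d : ℕ | ∃ f : MvPolynomial (Fin n) K, f.IsHomogeneous d ∧
      ∃ 𝔭 ∈ Ass I, I.colon (Ideal.span {f}) = 𝔭}.Nonempty :=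
    ⟨d, f, hd, _, mem_associatedPrimes_quotient_iff.2 ⟨hprime, f, rfl⟩, Ideal.colon_span⟩
  exact Nat.sInf_mem degrees_nonempty

theorem exists_isHomogeneous_vnumLocal_frobPow {𝔭 : Ideal (MvPolynomial (Fin n) K)} [𝔭.IsPrime]
    (h𝔭 : IsGraded 𝔭) :
    ∃ g : MvPolynomial (Fin n) K, g.IsHomogeneous (vnumLocal (frobPow 𝔭 (p ^ e)) 𝔭) ∧
      (frobPow 𝔭 (p ^ e)).colon (Ideal.span {g}) = 𝔭 := by
  obtain ⟨g, ⟨d, hd⟩, hg⟩ := exists_colon_map_iterateFrobenius_eq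
    (isFreeHom_iterateFrobenius K n p e) (IsNoetherian.noetherian 𝔭) h𝔭
  have degrees_nonempty : {d : ℕ | ∃ g : MvPolynomial (Fin n) K, g.IsHomogeneous d ∧
      (frobPow 𝔭 (p ^ e)).colon (Ideal.span {g}) = 𝔭}.Nonempty :=
    ⟨d, g, hd, Ideal.colon_span.trans hg⟩
  exact Nat.sInf_mem degrees_nonempty

theorem exists_vnum_frobPow_le (hI : IsGraded I) (hne : I ≠ ⊤) :
    ∃ 𝔭 ∈ Ass I,
      vnum (frobPow I (p ^ e)) ≤ p ^ e * vnum I + vnumLocal (frobPow 𝔭 (p ^ e)) 𝔭 := by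
  obtain ⟨f, f_hom, 𝔭, h𝔭, hf⟩ := exists_isHomogeneous_vnum hI hne
  have 𝔭_prime : 𝔭.IsPrime := IsAssociatedPrime.isPrime h𝔭
  rw [Ideal.colon_span] at hf
  have 𝔭_graded : IsGraded 𝔭 := hf ▸ isHomogeneous_colon_singleton hI ⟨_, f_hom⟩
  obtain ⟨g, g_hom, hg⟩ := exists_isHomogeneous_vnumLocal_frobPow (p := p) (e := e) 𝔭_graded
  have colon_eq : (frobPow I (p ^ e)).colon {f ^ p ^ e * g} = 𝔭 := by
    rw [Ideal.colon_span, frobPow_eq_map, ← hf] at hg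
    rw [frobPow_eq_map, ← iterateFrobenius_def,
      (isFreeHom_iterateFrobenius K n p e).colon_map_mul, hg, hf]
  refine ⟨𝔭, h𝔭, Nat.sInf_le ⟨f ^ p ^ e * g, ?_, 𝔭, ?_, Ideal.colon_span.trans colon_eq⟩⟩
  · simpa only [mul_comm] using (f_hom.pow (p ^ e)).mul g_hom
  · exact mem_associatedPrimes_quotient_iff.2 ⟨𝔭_prime, _, colon_eq⟩

theorem exists_forall_vnum_frobPow_succ_le (hI : IsGraded I) (hne : I ≠ ⊤) :
    ∃ C : ℕ, ∀ e, vnum (frobPow I (p ^ (e + 1))) ≤ p * vnum (frobPow I (p ^ e)) + C := by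
  obtain ⟨C, hC⟩ := ((associatedPrimes.finite _ _ : (Ass I).Finite).image
    fun 𝔭 ↦ vnumLocal (frobPow 𝔭 p) 𝔭).bddAbove
  refine ⟨C, fun e ↦ ?_⟩
  obtain ⟨𝔭, h𝔭, hle⟩ := exists_vnum_frobPow_le (p := p) (e := 1)
    (isHomogeneous_map_iterateFrobenius hI) (frobPow_ne_top (p := p) (e := e) hne)
  have local_le : vnumLocal (frobPow 𝔭 p) 𝔭 ≤ C := hC ⟨𝔭, Ass_frobPow_subset h𝔭, rfl⟩
  rw [← frobPow_eq_map, frobPow_frobPow, pow_one] at hle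
  exact hle.trans (Nat.add_le_add_left local_le _)

end VNumber

theorem exists_tendsto_div_pow_of_succ_le_mul_add {a : ℕ → ℝ} {b C : ℝ} (hb : 1 < b)
    (ha : ∀ e, 0 ≤ a e) (hsucc : ∀ e, a (e + 1) ≤ b * a e + C) :
    ∃ L, Filter.Tendsto (fun e ↦ a e / b ^ e) Filter.atTop (nhds L) := by
  have b_pos : 0 < b := by positivity
  -- `-D` is the fixed point of `x ↦ b * x + C`.
  let D := C / (b - 1)
  have hD : D + C = b * D := by
    have : b - 1 ≠ 0 := by linarith
    simp only [D]
    field_simp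
    ring
  have correction_tendsto : Filter.Tendsto (fun e : ℕ ↦ D / b ^ e) Filter.atTop (nhds 0) :=
    tendsto_const_nhds.div_atTop (tendsto_pow_atTop_atTop_of_one_lt hb)
  have antitone : Antitone fun e ↦ (a e + D) / b ^ e := by
    refine antitone_nat_of_succ_le fun e ↦ ?_
    calc (a (e + 1) + D) / b ^ (e + 1)
        ≤ b * (a e + D) / b ^ (e + 1) := by gcongr; linarith [hsucc e]
      _ = (a e + D) / b ^ e := by rw [pow_succ', mul_div_mul_left _ _ b_pos.ne']
  have bddBelow : BddBelow (Set.range fun e ↦ (a e + D) / b ^ e) := by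
    refine correction_tendsto.bddBelow_range.range_mono _ fun e ↦ ?_
    gcongr
    linarith [ha e]
  refine ⟨_, ((tendsto_atTop_ciInf antitone bddBelow).sub correction_tendsto).congr fun e ↦ ?_⟩
  rw [← sub_div, add_sub_cancel_right]

theorem stmt13 {K : Type*} [Field K] {n : ℕ} (p : ℕ) (hp : p.Prime) [CharP K p]
    (I : Ideal (MvPolynomial (Fin n) K)) (hgr : IsGraded I) (htop : I ≠ ⊤) (hbot : I ≠ ⊥) :
    ∃ L : ℝ, Filter.Tendsto (fun e : ℕ => (vnum (frobPow I (p ^ e)) : ℝ) / (p ^ e : ℝ))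
      Filter.atTop (nhds L) := by
  have : ExpChar K p := .prime hp
  obtain ⟨C, hC⟩ := exists_forall_vnum_frobPow_succ_le (p := p) hgr htop
  exact exists_tendsto_div_pow_of_succ_le_mul_add (C := C) (by exact_mod_cast hp.one_lt)
    (fun _ ↦ Nat.cast_nonneg _) fun e ↦ by exact_mod_cast hC e

end
end
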